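/- Let T be a complete first-order theory. Then T is rosy if and only if þ-forking satisfies symmetry, i.e. for all tuples a, b and all sets A in the monster model, tp(a/Ab) does not þ-fork over A if and only if tp(b/Aa) does not þ-fork over A. -/

import Mathlib

/- Framework for þ-forking inside a monster model, following Onshuus,
   "th-Forking, Algebraic Independence and Examples of Rosy Theories". -/

open FirstOrder FirstOrder.Language Set Cardinal

universe u

namespace ThForking

variable (L : FirstOrder.Language.{u, u}) {M : Type u} [L.Structure M]

/-- `a` and `a'` have the same type over the parameter set `A` (computed in the
ambient (monster) model `M`). -/
def SameType (A : Set M) {α : Type*} (a a' : α → M) : Prop :=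
  ∀ (m : ℕ) (c : Fin m → M), (∀ i, c i ∈ A) →
    ∀ φ : L.Formula (α ⊕ Fin m),
      φ.Realize (Sum.elim a c) ↔ φ.Realize (Sum.elim a' c)

/-- The set of realizations (in the monster model) of `tp(a/A)`. -/
def typeSet (A : Set M) {n : ℕ} (a : Fin n → M) : Set (Fin n → M) :=
  {a' | SameType L A a a'}

/-- `tp(a/A)` is algebraic: it has only finitely many realizations. -/
def IsAlgebraicTuple (A : Set M) {n : ℕ} (a : Fin n → M) : Prop :=
  (typeSet L A a).Finite

/-- The family of formulas `{δ(x, b) : b ∈ S}` is `k`-inconsistent: any `k`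
pairwise distinct instances are jointly unsatisfiable. -/
def KInconsistent {n m : ℕ} (δ : L.Formula (Fin n ⊕ Fin m))
    (S : Set (Fin m → M)) (k : ℕ) : Prop :=
  ∀ bs : Fin k → (Fin m → M), (∀ i, bs i ∈ S) → Function.Injective bs →
    ¬ ∃ x : Fin n → M, ∀ i, δ.Realize (Sum.elim x (bs i))

/-- The formula `δ(x, b)` strongly divides over `A`. -/
def StronglyDivides {n m : ℕ} (δ : L.Formula (Fin n ⊕ Fin m))
    (b : Fin m → M) (A : Set M) : Prop :=
  ¬ IsAlgebraicTuple L A b ∧ ∃ k : ℕ, KInconsistent L δ (typeSet L A b) k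

/-- The formula `δ(x, b)` þ-divides over `A`. -/
def ThDivides {n m : ℕ} (δ : L.Formula (Fin n ⊕ Fin m))
    (b : Fin m → M) (A : Set M) : Prop :=
  ∃ (p : ℕ) (c : Fin p → M), StronglyDivides L δ b (A ∪ Set.range c)

/-- The formula `φ(x, d)` þ-forks over `A`: it implies a finite disjunction of
formulas each of which þ-divides over `A`. -/
def ThForksFormula {n l : ℕ} (φ : L.Formula (Fin n ⊕ Fin l))
    (d : Fin l → M) (A : Set M) : Prop :=
  ∃ (s m : ℕ) (ψ : Fin s → L.Formula (Fin n ⊕ Fin m)) (b : Fin s → Fin m → M),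
    (∀ x : Fin n → M, φ.Realize (Sum.elim x d) →
      ∃ i, (ψ i).Realize (Sum.elim x (b i))) ∧
    ∀ i, ThDivides L (ψ i) (b i) A

/-- The type `tp(a/B)` þ-forks over `A`: it contains a formula (with parameters
from `B`) which þ-forks over `A`. -/
def TypeThForks {n : ℕ} (a : Fin n → M) (B A : Set M) : Prop :=
  ∃ (l : ℕ) (d : Fin l → M) (φ : L.Formula (Fin n ⊕ Fin l)),
    (∀ i, d i ∈ B) ∧ φ.Realize (Sum.elim a d) ∧ ThForksFormula L φ d A

/-- The local þ-rank `þ(p, δ, π, k) ≥ N`, where the partial type `p` is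
represented by its set `S` of realizations in the monster model. -/
def RankGE {n m r : ℕ} (δ : L.Formula (Fin n ⊕ Fin m))
    (π : L.Formula (Fin m ⊕ Fin r)) (k : ℕ) : ℕ → Set (Fin n → M) → Prop
  | 0, S => S.Nonempty
  | (N + 1), S => ∃ c : Fin r → M,
      {a : Fin m → M | π.Realize (Sum.elim a c) ∧
        RankGE δ π k N (S ∩ {x | δ.Realize (Sum.elim x a)})}.Infinite ∧
      KInconsistent L δ {a | π.Realize (Sum.elim a c)} k

/-- The theory of the monster model `M` is rosy: all of its local þ-ranks take
finite values. -/
def IsRosy : Prop :=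
  ∀ (n m r k : ℕ) (δ : L.Formula (Fin n ⊕ Fin m)) (π : L.Formula (Fin m ⊕ Fin r)),
    ∃ N : ℕ, ¬ RankGE L δ π k N (Set.univ : Set (Fin n → M))

/-- `M` is a monster model with respect to the cardinal `κ`: it is infinite,
`κ`-saturated and (finite-tuple) strongly `κ`-homogeneous. -/
structure IsMonster (κ : Cardinal.{u}) : Prop where
  infinite : Infinite M
  saturated : ∀ (A : Set M), #A < κ → ∀ (n : ℕ)
    (Φ : Set (Σ m : ℕ, L.Formula (Fin n ⊕ Fin m) × (Fin m → M))),
    (∀ q ∈ Φ, ∀ i, q.2.2 i ∈ A) →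
    (∀ s : Finset (Σ m : ℕ, L.Formula (Fin n ⊕ Fin m) × (Fin m → M)), ↑s ⊆ Φ →
      ∃ x : Fin n → M, ∀ q ∈ s, q.2.1.Realize (Sum.elim x q.2.2)) →
    ∃ x : Fin n → M, ∀ q ∈ Φ, q.2.1.Realize (Sum.elim x q.2.2)
  homogeneous : ∀ (A : Set M), #A < κ → ∀ (n : ℕ) (a a' : Fin n → M),
    SameType L A a a' →
    ∃ σ : M ≃[L] M, (∀ x ∈ A, σ x = x) ∧ σ ∘ a = a'

end ThForking

namespace ThProof

open ThForking

variable {L : FirstOrder.Language.{u, u}} {M : Type u} [L.Structure M]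

/-! ### Definable sets and formulas with parameters -/

theorem definable_of_formula {α : Type} {m : ℕ} {A : Set M} (φ : L.Formula (α ⊕ Fin m))
    (c : Fin m → M) (hc : ∀ i, c i ∈ A) :
    A.Definable L {x : α → M | φ.Realize (Sum.elim x c)} := by
  refine definable_iff_exists_formula_sum.2
    ⟨φ.relabel (Sum.elim Sum.inr (fun i => Sum.inl ⟨c i, hc i⟩)), ?_⟩
  ext x
  simp only [mem_ofPred_eq, Formula.realize_relabel]
  have : Sum.elim x c = Sum.elim (fun a : A => (a : M)) x ∘
      Sum.elim Sum.inr (fun i => Sum.inl ⟨c i, hc i⟩) := by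
    funext i; cases i <;> rfl
  rw [this]

theorem exists_formula {α : Type} {A : Set M} {D : Set (α → M)} (h : A.Definable L D) :
    ∃ (m : ℕ) (c : Fin m → M) (φ : L.Formula (α ⊕ Fin m)), (∀ i, c i ∈ A) ∧
      D = {x | φ.Realize (Sum.elim x c)} := by
  obtain ⟨A0, hA0, h0⟩ := definable_iff_finitely_definable.1 h
  obtain ⟨φ, rfl⟩ := definable_iff_exists_formula_sum.1 h0
  let e := A0.equivFin
  refine ⟨A0.card, fun i => (e.symm i : M), φ.relabel (Sum.elim (fun a => Sum.inr (e a)) Sum.inl),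
    fun i => hA0 (e.symm i).2, ?_⟩
  ext x
  simp only [mem_ofPred_eq, Formula.realize_relabel]
  have : Sum.elim (fun a : A0 => (a : M)) x = Sum.elim x (fun i => (e.symm i : M)) ∘
      (Sum.elim (fun a => Sum.inr (e a)) Sum.inl) := by
    funext i; cases i <;> simp
  exact iff_of_eq (congrArg _ this)

theorem definable_extract {α β : Type} {A : Set M} {c : β → M} {D : Set (α → M)}
    (h : (A ∪ Set.range c).Definable L D) :
    ∃ D' : Set (α ⊕ β → M), A.Definable L D' ∧ D = {y | Sum.elim y c ∈ D'} := by
  classical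
  obtain ⟨φ, rfl⟩ := definable_iff_exists_formula_sum.1 h
  have hc : ∀ x : (A ∪ Set.range c : Set M), (x : M) ∉ A → ∃ i, c i = x :=
    fun x hx => x.2.resolve_left hx
  let f : (A ∪ Set.range c : Set M) → A ⊕ (α ⊕ β) := fun x =>
    if hx : (x : M) ∈ A then Sum.inl ⟨x, hx⟩ else Sum.inr (Sum.inr (hc x hx).choose)
  refine ⟨_, definable_iff_exists_formula_sum.2
    ⟨φ.relabel (Sum.elim f (fun i => Sum.inr (Sum.inl i))), rfl⟩, ?_⟩
  ext x
  simp only [mem_ofPred_eq, Formula.realize_relabel]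
  have : Sum.elim (fun a : (A ∪ Set.range c : Set M) => (a : M)) x =
      Sum.elim (fun a : A => (a : M)) (Sum.elim x c) ∘
      (Sum.elim f (fun i => Sum.inr (Sum.inl i))) := by
    funext i
    rcases i with i | i
    · by_cases hi : (i : M) ∈ A
      · simp [f, hi]
      · simp [f, hi, (hc i hi).choose_spec]
    · rfl
  exact iff_of_eq (congrArg _ this)

theorem definable_fiber {α β : Type} {A : Set M} (c : β → M) {D : Set (α ⊕ β → M)}
    (h : A.Definable L D) : (A ∪ Set.range c).Definable L {y : α → M | Sum.elim y c ∈ D} := by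
  obtain ⟨φ, rfl⟩ := definable_iff_exists_formula_sum.1 h
  refine definable_iff_exists_formula_sum.2
    ⟨φ.relabel (Sum.elim (fun a : A => Sum.inl ⟨a, Or.inl a.2⟩)
      (Sum.elim Sum.inr (fun i => Sum.inl ⟨c i, Or.inr ⟨i, rfl⟩⟩))), ?_⟩
  ext x
  simp only [mem_ofPred_eq, Formula.realize_relabel]
  refine iff_of_eq (congrArg _ ?_)
  funext i
  rcases i with i | i | i <;> rfl

theorem definable_ne {α : Type} {A : Set M} {i j : α} :
    A.Definable L {x : α → M | x i = x j} :=
  ⟨(Term.var i).equal (Term.var j), by ext; simp⟩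

theorem definable_tuple_eq {α β : Type} [Finite β] {A : Set M} (f g : β → α) :
    A.Definable L {x : α → M | x ∘ f = x ∘ g} := by
  have : {x : α → M | x ∘ f = x ∘ g} = ⋂ i, {x : α → M | x (f i) = x (g i)} := by
    ext x; simp [funext_iff]
  rw [this]
  exact definable_iInter_of_finite fun i => definable_ne

theorem definable_exists {α β : Type} [Finite β] {A : Set M} {P : (α → M) → (β → M) → Prop}
    (h : A.Definable L {w : α ⊕ β → M | P (w ∘ Sum.inl) (w ∘ Sum.inr)}) :
    A.Definable L {v | ∃ w, P v w} := by
  have := h.exists_of_finite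
  simpa using this

theorem sameType_iff {α : Type} {A : Set M} {a a' : α → M} :
    SameType L A a a' ↔ ∀ D : Set (α → M), A.Definable L D → (a ∈ D ↔ a' ∈ D) := by
  constructor
  · intro h D hD
    obtain ⟨m, c, φ, hc, rfl⟩ := exists_formula hD
    exact h m c hc φ
  · intro h m c hc φ
    exact h _ (definable_of_formula φ c hc)

theorem saturated {κ : Cardinal.{u}} (hM : IsMonster L (M := M) κ) {α : Type} [Finite α]
    {A : Set M} (hA : #A < κ) (𝒟 : Set (Set (α → M))) (hd : ∀ D ∈ 𝒟, A.Definable L D)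
    (hf : ∀ s : Finset (Set (α → M)), ↑s ⊆ 𝒟 → ∃ x, ∀ D ∈ s, x ∈ D) :
    ∃ x, ∀ D ∈ 𝒟, x ∈ D := by
  classical
  obtain ⟨n, ⟨e⟩⟩ := Finite.exists_equiv_fin α
  let toSet : (Σ m : ℕ, L.Formula (Fin n ⊕ Fin m) × (Fin m → M)) → Set (α → M) :=
    fun q => {x | q.2.1.Realize (Sum.elim (x ∘ e.symm) q.2.2)}
  obtain ⟨x, hx⟩ := hM.saturated A hA n {q | toSet q ∈ 𝒟 ∧ ∀ i, q.2.2 i ∈ A}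
    (fun q hq => hq.2) (fun s hs => by
      obtain ⟨x, hx⟩ := hf (s.image toSet) (by
        intro D hD
        simp only [Finset.coe_image, Set.mem_image] at hD
        obtain ⟨q, hq, rfl⟩ := hD
        exact (hs hq).1)
      exact ⟨x ∘ e.symm, fun q hq => hx _ (Finset.mem_image_of_mem _ hq)⟩)
  refine ⟨x ∘ e, fun D hD => ?_⟩
  obtain ⟨m, c, φ, hc, rfl⟩ := exists_formula (hd D hD)
  have h1 : toSet ⟨m, φ.relabel (Sum.map e id), c⟩ = {x | φ.Realize (Sum.elim x c)} := by
    ext y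
    simp only [toSet, mem_ofPred_eq, Formula.realize_relabel]
    refine iff_of_eq (congrArg _ ?_)
    funext i; rcases i with i | i <;> simp
  have := hx ⟨m, φ.relabel (Sum.map e id), c⟩ ⟨by rw [h1]; exact hD, hc⟩
  simp only [Formula.realize_relabel] at this
  convert this using 1
  simp only [mem_ofPred_eq]
  refine iff_of_eq (congrArg _ ?_)
  funext i; rcases i with i | i <;> simp

theorem definable_realize {α : Type} {A : Set M} (φ : L.Formula α) :
    A.Definable L {v : α → M | φ.Realize v} :=
  (empty_definable_iff.2 ⟨φ, rfl⟩).mono (Set.empty_subset A)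

theorem definable_sInter {α : Type} {A : Set M} (s : Finset (Set (α → M)))
    (h : ∀ D ∈ s, A.Definable L D) : A.Definable L (⋂₀ (s : Set (Set (α → M)))) := by
  classical
  induction s using Finset.induction_on with
  | empty => simp
  | insert D s hD ih =>
    rw [Finset.coe_insert, Set.sInter_insert]
    exact (h D (by simp)).inter (ih fun E hE => h E (by simp [hE]))

/-- `at least l` quantifiers preserve definability -/
theorem definable_atLeast {α β : Type} [Finite β] {A : Set M} (l : ℕ)
    {P : (α → M) → (β → M) → Prop}
    (h : A.Definable L {w : α ⊕ β → M | P (w ∘ Sum.inl) (w ∘ Sum.inr)}) :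
    A.Definable L {v | ∃ w : Fin l → β → M, Function.Injective w ∧ ∀ i, P v (w i)} := by
  have h1 : A.Definable L {v | ∃ w : Fin l × β → M,
      (∀ i j, i ≠ j → ¬ (fun b => w (i, b)) = (fun b => w (j, b))) ∧
        ∀ i, P v (fun b => w (i, b))} := by
    apply definable_exists
    have e : {w : α ⊕ (Fin l × β) → M |
        (∀ i j, i ≠ j → ¬ (fun b => (w ∘ Sum.inr) (i, b)) = (fun b => (w ∘ Sum.inr) (j, b))) ∧
        ∀ i, P (w ∘ Sum.inl) (fun b => (w ∘ Sum.inr) (i, b))} =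
        (⋂ q : {q : Fin l × Fin l // q.1 ≠ q.2},
          {w : α ⊕ (Fin l × β) → M | w ∘ (fun b => Sum.inr (q.1.1, b)) =
            w ∘ (fun b => Sum.inr (q.1.2, b))}ᶜ) ∩
        ⋂ i : Fin l, (fun w : α ⊕ (Fin l × β) → M =>
          w ∘ Sum.map id (fun b => (i, b))) ⁻¹'
          {w : α ⊕ β → M | P (w ∘ Sum.inl) (w ∘ Sum.inr)} := by
      ext w
      simp only [mem_ofPred_eq, Set.mem_inter_iff, Set.mem_iInter, Set.mem_compl_iff,
        Set.mem_preimage, Subtype.forall, Prod.forall]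
      rfl
    rw [e]
    exact (definable_iInter_of_finite fun q => (definable_tuple_eq _ _).compl).inter
      (definable_iInter_of_finite fun i => h.preimage_comp _)
  convert h1 using 2
  ext v
  constructor
  · rintro ⟨w, hw, hP⟩
    exact ⟨fun q => w q.1 q.2, fun i j hij h => hij (hw h), hP⟩
  · rintro ⟨w, hw, hP⟩
    exact ⟨fun i b => w (i, b), fun i j hij => by_contra fun hne => hw i j hne hij, hP⟩

theorem SameType.comp {α β : Type} {A : Set M} {a a' : α → M} (h : SameType L A a a')
    (f : β → α) : SameType L A (a ∘ f) (a' ∘ f) :=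
  sameType_iff.2 fun _ hD => sameType_iff.1 h _ (hD.preimage_comp f)

theorem sameType_of_imp {α : Type} {A : Set M} {a a' : α → M}
    (h : ∀ D : Set (α → M), A.Definable L D → a ∈ D → a' ∈ D) : SameType L A a a' :=
  sameType_iff.2 fun D hD => ⟨h D hD, fun h' => by_contra fun hn => h _ hD.compl hn h'⟩

theorem typeSet_subset {m : ℕ} {A : Set M} {e : Fin m → M} {D : Set (Fin m → M)}
    (hD : A.Definable L D) (he : e ∈ D) : typeSet L A e ⊆ D :=
  fun _ h => (sameType_iff.1 h D hD).1 he

theorem card_union_lt {κ : Cardinal.{u}} (hκ : ℵ₀ < κ) {A F : Set M} (hA : #A < κ)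
    (hF : #F < κ) : #(A ∪ F : Set M) < κ :=
  (mk_union_le A F).trans_lt (add_lt_of_lt hκ.le hA hF)

theorem card_finite_lt {κ : Cardinal.{u}} (hκ : ℵ₀ < κ) {F : Set M} (hF : F.Finite) : #F < κ :=
  (lt_aleph0_iff_set_finite.2 hF).trans hκ

theorem definable_ne_const {α : Type} [Finite α] {A : Set M} (e : α → M) (h : ∀ i, e i ∈ A) :
    A.Definable L {y : α → M | y = e} := by
  have h1 : A.Definable L (⋂ i, {y : α → M | y i = e i}) := by
    refine definable_iInter_of_finite fun i => ?_
    have := definable_of_formula (A := A) (α := α) (m := 1)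
      ((Term.var (L := L) (Sum.inl i)).equal (Term.var (Sum.inr 0))) (fun _ => e i) (fun _ => h i)
    simpa using this
  convert h1 using 1
  ext y; simp [funext_iff]

theorem exists_finite_definable {κ : Cardinal.{u}} (hM : IsMonster L (M := M) κ) (hκ : ℵ₀ < κ)
    {A : Set M} (hA : #A < κ) {m : ℕ} {e : Fin m → M} (h : (typeSet L A e).Finite) :
    ∃ D, A.Definable L D ∧ D.Finite ∧ e ∈ D := by
  classical
  by_contra! hno
  obtain ⟨x, hx⟩ := saturated hM (A := A ∪ ⋃ e' ∈ typeSet L A e, Set.range e')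
    (card_union_lt hκ hA (card_finite_lt hκ (h.biUnion fun _ _ => Set.finite_range _)))
    ({D : Set (Fin m → M) | A.Definable L D ∧ e ∈ D} ∪
      {D | ∃ e' ∈ typeSet L A e, D = {y | y = e'}ᶜ}) (by
      rintro D (hD | ⟨e', he', rfl⟩)
      · exact hD.1.mono Set.subset_union_left
      · refine (definable_ne_const e' fun i => Or.inr ?_).compl
        simp only [Set.mem_iUnion]
        exact ⟨e', he', i, rfl⟩) (by
      intro s hs
      have hd := definable_sInter (L := L) (A := A)
        (s.filter fun D => A.Definable L D ∧ e ∈ D) (by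
          intro D hD; exact (Finset.mem_filter.1 hD).2.1)
      have hinf : (⋂₀ ((s.filter fun D => A.Definable L D ∧ e ∈ D : Finset _) :
          Set (Set (Fin m → M)))).Infinite := by
        intro hfin
        refine hno _ hd hfin ?_
        intro D hD
        exact (Finset.mem_filter.1 hD).2.2
      obtain ⟨x, hx, hx'⟩ := (hinf.sdiff h).nonempty
      refine ⟨x, fun D hD => ?_⟩
      rcases hs hD with hD' | ⟨e', he', rfl⟩
      · exact hx D (by simpa using ⟨hD, hD'⟩)
      · rintro rfl; exact hx' he')
  have hxt : x ∈ typeSet L A e :=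
    sameType_of_imp fun D hD he => hx D (Or.inl ⟨hD, he⟩)
  exact hx _ (Or.inr ⟨x, hxt, rfl⟩) rfl

theorem exists_kInconsistent {κ : Cardinal.{u}} (hM : IsMonster L (M := M) κ)
    {A : Set M} (hA : #A < κ) {n m : ℕ} {δ : L.Formula (Fin n ⊕ Fin m)} {k : ℕ} {e : Fin m → M}
    (h : KInconsistent L δ (typeSet L A e) k) :
    ∃ D, A.Definable L D ∧ e ∈ D ∧ KInconsistent L δ D k := by
  classical
  by_contra! hno
  have hno' : ∀ D, A.Definable L D → e ∈ D → ∃ bs : Fin k → (Fin m → M), (∀ i, bs i ∈ D) ∧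
      Function.Injective bs ∧ ∃ x : Fin n → M, ∀ i, δ.Realize (Sum.elim x (bs i)) := by
    intro D hD he
    have := hno D hD he
    unfold KInconsistent at this
    push Not at this
    exact this
  let row : Fin k → (Fin n ⊕ (Fin k × Fin m) → M) → (Fin m → M) := fun i w j => w (Sum.inr (i, j))
  have hrow : ∀ i D, A.Definable L D → A.Definable L {w | row i w ∈ D} := fun i D hD =>
    hD.preimage_comp (fun j => (Sum.inr (i, j) : Fin n ⊕ (Fin k × Fin m)))
  let G : Set (Fin n ⊕ (Fin k × Fin m) → M) :=
    {w | (∀ i j, i ≠ j → row i w ≠ row j w) ∧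
      ∀ i, δ.Realize (Sum.elim (w ∘ Sum.inl) (row i w))}
  have hG : A.Definable L G := by
    have e : G = (⋂ q : {q : Fin k × Fin k // q.1 ≠ q.2},
          {w : Fin n ⊕ (Fin k × Fin m) → M | w ∘ (fun b => Sum.inr (q.1.1, b)) =
            w ∘ (fun b => Sum.inr (q.1.2, b))}ᶜ) ∩
        ⋂ i : Fin k, (fun w : Fin n ⊕ (Fin k × Fin m) → M =>
          w ∘ Sum.map id (fun b => (i, b))) ⁻¹' {v | δ.Realize v} := by
      ext w
      simp only [G, mem_ofPred_eq, Set.mem_inter_iff, Set.mem_iInter, Set.mem_compl_iff,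
        Set.mem_preimage, Subtype.forall, Prod.forall]
      refine and_congr Iff.rfl (forall_congr' fun i => iff_of_eq (congrArg _ ?_))
      funext b; rcases b with b | b <;> rfl
    rw [e]
    exact (definable_iInter_of_finite fun q => (definable_tuple_eq _ _).compl).inter
      (definable_iInter_of_finite fun i => (definable_realize δ).preimage_comp _)
  obtain ⟨w, hw⟩ := saturated hM hA
    ({G} ∪ {E | ∃ D, A.Definable L D ∧ e ∈ D ∧ ∃ i, E = {w | row i w ∈ D}}) (by
      rintro E (rfl | ⟨D, hD, he, i, rfl⟩)
      · exact hG
      · exact hrow i D hD) (by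
      intro s hs
      have hch : ∀ E : Set (Fin n ⊕ (Fin k × Fin m) → M), ∃ D : Set (Fin m → M),
          A.Definable L D ∧ e ∈ D ∧
          (E ∈ s → E = G ∨ ∃ i, E = {w | row i w ∈ D}) := by
        intro E
        by_cases hE : E ∈ s
        · rcases hs hE with h | ⟨D, hD, he, i, h⟩
          · exact ⟨Set.univ, definable_univ, trivial, fun _ => Or.inl h⟩
          · exact ⟨D, hD, he, fun _ => Or.inr ⟨i, h⟩⟩
        · exact ⟨Set.univ, definable_univ, trivial, fun h => absurd h hE⟩
      choose D hD he hE using hch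
      obtain ⟨bs, hbs, hinj, x, hx⟩ := hno' (⋂₀ ((s.image D : Finset _) : Set (Set (Fin m → M))))
        (definable_sInter _ (by simp only [Finset.mem_image]; rintro _ ⟨E, _, rfl⟩; exact hD E))
        (by
          intro D' hD'
          simp only [Finset.coe_image, Set.mem_image] at hD'
          obtain ⟨E, _, rfl⟩ := hD'
          exact he E)
      refine ⟨Sum.elim x (fun q => bs q.1 q.2), fun E hEs => ?_⟩
      rcases hE E hEs with h | ⟨i, h⟩
      · rw [h]
        exact ⟨fun i j hij h => hij (hinj h), fun i => hx i⟩
      · rw [h]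
        exact hbs i (D E) (by
          simp only [Finset.coe_image, Set.mem_image]; exact ⟨E, hEs, rfl⟩))
  have hwG := hw G (Or.inl rfl)
  refine h (fun i => row i w) (fun i => ?_)
    (fun i j hij => by_contra fun hne => hwG.1 i j hne hij) ⟨w ∘ Sum.inl, hwG.2⟩
  exact sameType_of_imp fun D hD he => hw _ (Or.inr ⟨D, hD, he, i, rfl⟩)

/-! ### Extension and algebraic independence -/

/-- no instance over `B` of a formula that þ-divides over `A` is satisfied by `a` -/
def Ind (L : FirstOrder.Language.{u, u}) [L.Structure M] {n : ℕ} (a : Fin n → M)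
    (B A : Set M) : Prop :=
  ∀ (m : ℕ) (ψ : L.Formula (Fin n ⊕ Fin m)) (d : Fin m → M), (∀ i, d i ∈ B) →
    ThDivides L ψ d A → ¬ ψ.Realize (Sum.elim a d)

theorem thDivides_pad {n m m' : ℕ} (hm : m ≤ m') {ψ : L.Formula (Fin n ⊕ Fin m)}
    {b : Fin m → M} {A : Set M} (h : ThDivides L ψ b A) :
    ∃ (ψ' : L.Formula (Fin n ⊕ Fin m')) (b' : Fin m' → M),
      (∀ x, ψ'.Realize (Sum.elim x b') ↔ ψ.Realize (Sum.elim x b)) ∧ ThDivides L ψ' b' A := by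
  obtain ⟨p, c, hinf, k, hk⟩ := h
  have hm0 : 0 < m := by
    rcases Nat.eq_zero_or_pos m with rfl | h
    · exact absurd (Set.toFinite _) hinf
    · exact h
  let f : Fin m' → Fin m := fun i => ⟨min i.1 (m - 1), by omega⟩
  let g : Fin m → Fin m' := Fin.castLE hm
  have hfg : ∀ i, f (g i) = i := by
    intro i; ext; simp only [f, g, Fin.val_castLE]; omega
  have hfg' : ∀ b : Fin m → M, (b ∘ f) ∘ g = b := fun b => by
    funext i; simp [hfg]
  have hr : ∀ (x : Fin n → M) (b : Fin m' → M),
      (ψ.relabel (Sum.map id g)).Realize (Sum.elim x b) ↔ ψ.Realize (Sum.elim x (b ∘ g)) := by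
    intro x b
    rw [Formula.realize_relabel]
    refine iff_of_eq (congrArg _ ?_)
    funext i; rcases i with i | i <;> rfl
  refine ⟨ψ.relabel (Sum.map id g), b ∘ f, fun x => by rw [hr, hfg'], p, c, ?_, k, ?_⟩
  · intro hfin
    refine hinf (Set.Finite.of_finite_image (f := fun y : Fin m → M => y ∘ f)
      (hfin.subset ?_) ?_)
    · rintro _ ⟨y, hy, rfl⟩
      exact SameType.comp hy f
    · intro y _ y' _ hyy
      have := congrArg (· ∘ g) hyy
      simpa [hfg'] using this
  · intro bs hbs hinj
    rintro ⟨x, hx⟩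
    have hmem : ∀ i, bs i ∘ g ∈ typeSet L (A ∪ Set.range c) b := fun i => by
      have := SameType.comp (hbs i) g
      rwa [hfg'] at this
    have heq : ∀ i, (bs i ∘ g) ∘ f = bs i := by
      intro i
      have h1 := sameType_iff.1 (hbs i) {y | y ∘ (g ∘ f) = y ∘ id} (definable_tuple_eq _ _)
      have h2 : b ∘ f ∈ {y : Fin m' → M | y ∘ (g ∘ f) = y ∘ id} := by
        funext i; simp [hfg]
      exact h1.1 h2
    refine hk (fun i => bs i ∘ g) hmem (fun i j hij => hinj ?_) ⟨x, fun i => (hr _ _).1 (hx i)⟩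
    rw [← heq i, ← heq j]
    exact congrArg (· ∘ f) hij

theorem exists_ind {κ : Cardinal.{u}} (hM : IsMonster L (M := M) κ) (hκ : ℵ₀ < κ)
    {n : ℕ} {a : Fin n → M} {A B C : Set M} (hC : #C < κ) (hB : #B < κ)
    (hf : ¬ TypeThForks L a C A) : ∃ a', SameType L C a a' ∧ Ind L a' B A := by
  classical
  obtain ⟨x, hx⟩ := saturated hM (A := C ∪ B) (card_union_lt hκ hC hB)
    ({D : Set (Fin n → M) | C.Definable L D ∧ a ∈ D} ∪
      {D | ∃ (m : ℕ) (ψ : L.Formula (Fin n ⊕ Fin m)) (d : Fin m → M), (∀ i, d i ∈ B) ∧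
        ThDivides L ψ d A ∧ D = {x | ψ.Realize (Sum.elim x d)}ᶜ}) (by
      rintro D (hD | ⟨m, ψ, d, hd, h, rfl⟩)
      · exact hD.1.mono Set.subset_union_left
      · exact (definable_of_formula ψ d fun i => Or.inr (hd i)).compl) (by
      intro s hs
      by_contra! hno
      apply hf
      have hd := definable_sInter (L := L) (A := C)
        (s.filter fun D => C.Definable L D ∧ a ∈ D) (by
          intro D hD; exact (Finset.mem_filter.1 hD).2.1)
      obtain ⟨l, d, φ, hdC, hφ⟩ := exists_formula hd
      refine ⟨l, d, φ, hdC, ?_, ?_⟩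
      · have : a ∈ (⋂₀ ((s.filter fun D => C.Definable L D ∧ a ∈ D : Finset _) :
            Set (Set (Fin n → M)))) := by
          intro D hD
          exact (Finset.mem_filter.1 hD).2.2
        rw [hφ] at this
        exact this
      · let t := s.filter fun D => ¬ (C.Definable L D ∧ a ∈ D)
        have ht : ∀ D : t, ∃ (m : ℕ) (ψ : L.Formula (Fin n ⊕ Fin m)) (d : Fin m → M),
            ThDivides L ψ d A ∧ D.1 = {x | ψ.Realize (Sum.elim x d)}ᶜ := by
          rintro ⟨D, hD⟩
          obtain ⟨h1, h2⟩ := Finset.mem_filter.1 hD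
          rcases hs h1 with h | ⟨m, ψ, d, _, h, h'⟩
          · exact absurd h h2
          · exact ⟨m, ψ, d, h, h'⟩
        choose m ψ b hdiv heq using ht
        let m' := Finset.univ.sup m
        have hm' : ∀ D, m D ≤ m' := fun D => Finset.le_sup (f := m) (Finset.mem_univ D)
        choose ψ' b' hr hdiv' using fun D => thDivides_pad (hm' D) (hdiv D)
        let e := t.equivFin
        refine ⟨t.card, m', fun i => ψ' (e.symm i), fun i => b' (e.symm i), ?_, fun i => hdiv' _⟩
        intro x hx
        obtain ⟨D, hDs, hxD⟩ := hno x
        have hDt : D ∈ t := by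
          refine Finset.mem_filter.2 ⟨hDs, fun hD => hxD ?_⟩
          have hx' : x ∈ {x | φ.Realize (Sum.elim x d)} := hx
          rw [← hφ] at hx'
          exact hx' D (by simpa using ⟨hDs, hD⟩)
        refine ⟨e ⟨D, hDt⟩, ?_⟩
        simp only [Equiv.symm_apply_apply]
        rw [hr]
        have := heq ⟨D, hDt⟩
        simp only at this
        rw [this] at hxD
        simpa using hxD)
  refine ⟨x, sameType_of_imp fun D hD ha => hx D (Or.inl ⟨hD, ha⟩), fun m ψ d hd h => ?_⟩
  exact hx _ (Or.inr ⟨m, ψ, d, hd, h, rfl⟩)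

theorem ind_infinite {κ : Cardinal.{u}} (hM : IsMonster L (M := M) κ) (hκ : ℵ₀ < κ)
    {n : ℕ} {a : Fin n → M} {A B F : Set M} (hA : #A < κ) (h : Ind L a B A) (hAB : A ⊆ B)
    (hF : F.Finite) (hFB : F ⊆ B) {m : ℕ} {e : Fin m → M} (he : ∀ i, e i ∈ B)
    (hinf : (typeSet L (A ∪ F) e).Infinite) :
    (typeSet L (A ∪ F ∪ Set.range a) e).Infinite := by
  intro hfin
  obtain ⟨D, hD, hDfin, heD⟩ := exists_finite_definable hM hκ
    (card_union_lt hκ (card_union_lt hκ hA (card_finite_lt hκ hF))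
      (card_finite_lt hκ (Set.finite_range a))) hfin
  obtain ⟨D', hD', rfl⟩ := definable_extract hD
  obtain ⟨q, d, φ, hd, rfl⟩ := exists_formula hD'
  set D := {y : Fin m → M | Sum.elim y a ∈ {x | φ.Realize (Sum.elim x d)}} with hDdef
  let l := D.ncard
  let P : (Fin n ⊕ Fin (m + q) → M) → (Fin m → M) → Prop := fun v y =>
    φ.Realize (Sum.elim (Sum.elim y (v ∘ Sum.inl)) (v ∘ Sum.inr ∘ Fin.natAdd m))
  have hP : (∅ : Set M).Definable L
      {w : (Fin n ⊕ Fin (m + q)) ⊕ Fin m → M | P (w ∘ Sum.inl) (w ∘ Sum.inr)} := by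
    convert (definable_realize (A := (∅ : Set M)) φ).preimage_comp
      (Sum.elim (Sum.elim Sum.inr (Sum.inl ∘ Sum.inl)) (Sum.inl ∘ Sum.inr ∘ Fin.natAdd m) :
        (Fin m ⊕ Fin n) ⊕ Fin q → (Fin n ⊕ Fin (m + q)) ⊕ Fin m) using 1
    ext w
    simp only [P, mem_ofPred_eq, Set.mem_preimage]
    refine iff_of_eq (congrArg _ ?_)
    funext i; rcases i with (i | i) | i <;> rfl
  have hE : (∅ : Set M).Definable L
      ({v : Fin n ⊕ Fin (m + q) → M | P v (v ∘ Sum.inr ∘ Fin.castAdd q)} ∩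
      {v | ∃ w : Fin (l + 1) → Fin m → M, Function.Injective w ∧ ∀ i, P v (w i)}ᶜ) := by
    refine Definable.inter ?_ (definable_atLeast _ hP).compl
    convert hP.preimage_comp (Sum.elim id (Sum.inr ∘ Fin.castAdd q)) using 1
    ext v
    exact Iff.rfl
  obtain ⟨δ, hδ⟩ := empty_definable_iff.1 hE
  have hδ' : ∀ v, δ.Realize v ↔ P v (v ∘ Sum.inr ∘ Fin.castAdd q) ∧
      ¬ ∃ w : Fin (l + 1) → Fin m → M, Function.Injective w ∧ ∀ i, P v (w i) := by
    intro v
    exact iff_of_eq (congrArg (fun s => v ∈ s) hδ.symm)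
  obtain ⟨p, c, hc⟩ : ∃ (p : ℕ) (c : Fin p → M), Set.range c = F := by
    obtain ⟨p, c, hc⟩ := hF.fin_param
    exact ⟨p, c, hc.2⟩
  have hsum : ∀ (x : Fin n → M) (b : Fin (m + q) → M) (y : Fin m → M), P (Sum.elim x b) y ↔
      φ.Realize (Sum.elim (Sum.elim y x) (b ∘ Fin.natAdd m)) := fun x b y => Iff.rfl
  refine h (m + q) δ (Fin.append e d) ?_ ⟨p, c, ?_, l + 1, ?_⟩ ?_
  · intro i
    refine Fin.addCases (fun i => ?_) (fun i => ?_) i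
    · simpa using he i
    · simpa using Set.union_subset hAB hFB (hd i)
  · rw [hc]
    intro hfin2
    refine hinf (Set.Finite.of_finite_image (f := fun y : Fin m → M => Fin.append y d)
      (hfin2.subset ?_) ?_)
    · rintro _ ⟨y, hy, rfl⟩
      refine sameType_iff.2 fun E hE => ?_
      have h1 := definable_fiber d (hE.preimage_comp (finSumFinEquiv (m := m) (n := q)).symm)
      have h2 : A ∪ F ∪ Set.range d = A ∪ F := by
        rw [Set.union_eq_left]; rintro _ ⟨i, rfl⟩; exact hd i
      rw [h2] at h1
      have h3 := sameType_iff.1 hy _ h1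
      have h4 : ∀ y : Fin m → M, Sum.elim y d ∘ finSumFinEquiv.symm = Fin.append y d := by
        intro y; funext i
        refine Fin.addCases (fun i => ?_) (fun i => ?_) i <;> simp
      simpa [h4] using h3
    · intro y _ y' _ hyy
      funext i
      have := congrFun hyy (Fin.castAdd q i)
      simpa using this
  · rw [hc]
    intro bs hbs hinj
    rintro ⟨x, hx⟩
    have htail : ∀ i, bs i ∘ Fin.natAdd m = d := by
      intro i
      have h1 := (sameType_iff.1 (SameType.comp (hbs i) (Fin.natAdd m))) _ (definable_ne_const d hd)
      refine h1.1 ?_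
      funext j; simp
    have h0 := fun i => (hδ' _).1 (hx i)
    refine (h0 0).2 ⟨fun i => bs i ∘ Fin.castAdd q, fun i j hij => hinj ?_, fun i => ?_⟩
    · funext s
      refine Fin.addCases (fun s => ?_) (fun s => ?_) s
      · exact congrFun hij s
      · exact congrFun ((htail i).trans (htail j).symm) s
    · have := (h0 i).1
      rw [hsum, htail] at this ⊢
      exact this
  · rw [hδ']
    have hd' : Fin.append e d ∘ Fin.natAdd m = d := by funext i; simp
    have he' : (Sum.elim a (Fin.append e d)) ∘ Sum.inr ∘ Fin.castAdd q = e := by funext i; simp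
    constructor
    · rw [he', hsum, hd']; exact heD
    · rintro ⟨w, hw, hwP⟩
      have hsub : Set.range w ⊆ D := by
        rintro _ ⟨i, rfl⟩
        have := hwP i
        rw [hsum, hd'] at this
        exact this
      have := Set.ncard_le_ncard hsub hDfin
      rw [Set.ncard_range_of_injective hw] at this
      simp [l] at this

/-! ### Ranks for finitely many formulas, and rosy implies symmetry -/

/-- The joint rank of a family of triples. -/
def Rk {n m s : ℕ} (δ : Fin s → L.Formula (Fin n ⊕ Fin m)) (r : Fin s → ℕ)
    (π : ∀ j, L.Formula (Fin m ⊕ Fin (r j))) (k : Fin s → ℕ) : ℕ → Set (Fin n → M) → Prop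
  | 0, S => S.Nonempty
  | (N + 1), S => ∃ (j : Fin s) (c : Fin (r j) → M),
      {a : Fin m → M | (π j).Realize (Sum.elim a c) ∧
        Rk δ r π k N (S ∩ {x | (δ j).Realize (Sum.elim x a)})}.Infinite ∧
      KInconsistent L (δ j) {a | (π j).Realize (Sum.elim a c)} (k j)

theorem RankGE.mono {n m r k : ℕ} {δ : L.Formula (Fin n ⊕ Fin m)}
    {π : L.Formula (Fin m ⊕ Fin r)} {N : ℕ} : ∀ {S S' : Set (Fin n → M)}, S ⊆ S' →
    RankGE L δ π k N S → RankGE L δ π k N S' := by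
  induction N with
  | zero => intro S S' h h'; exact Set.Nonempty.mono h h'
  | succ N ih =>
    rintro S S' h ⟨c, hc, hk⟩
    refine ⟨c, hc.mono ?_, hk⟩
    rintro a ⟨h1, h2⟩
    exact ⟨h1, ih (Set.inter_subset_inter_left _ h) h2⟩

section

variable {n m s : ℕ} {δ : Fin s → L.Formula (Fin n ⊕ Fin m)} {r : Fin s → ℕ}
    {π : ∀ j, L.Formula (Fin m ⊕ Fin (r j))} {k : Fin s → ℕ}

theorem Rk.mono {N : ℕ} : ∀ {S S' : Set (Fin n → M)}, S ⊆ S' →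
    Rk δ r π k N S → Rk δ r π k N S' := by
  induction N with
  | zero => intro S S' h h'; exact Set.Nonempty.mono h h'
  | succ N ih =>
    rintro S S' h ⟨j, c, hc, hk⟩
    refine ⟨j, c, hc.mono ?_, hk⟩
    rintro a ⟨h1, h2⟩
    exact ⟨h1, ih (Set.inter_subset_inter_left _ h) h2⟩

theorem Rk.union {N : ℕ} : ∀ {S S' : Set (Fin n → M)},
    Rk δ r π k N (S ∪ S') → Rk δ r π k N S ∨ Rk δ r π k N S' := by
  induction N with
  | zero => intro S S' h; exact Set.union_nonempty.1 h
  | succ N ih =>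
    rintro S S' ⟨j, c, hc, hk⟩
    have hsub : {a : Fin m → M | (π j).Realize (Sum.elim a c) ∧
        Rk δ r π k N ((S ∪ S') ∩ {x | (δ j).Realize (Sum.elim x a)})} ⊆
        {a : Fin m → M | (π j).Realize (Sum.elim a c) ∧
          Rk δ r π k N (S ∩ {x | (δ j).Realize (Sum.elim x a)})} ∪
        {a : Fin m → M | (π j).Realize (Sum.elim a c) ∧
          Rk δ r π k N (S' ∩ {x | (δ j).Realize (Sum.elim x a)})} := by
      rintro a ⟨h1, h2⟩
      rw [Set.union_inter_distrib_right] at h2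
      exact (ih h2).imp (fun h => ⟨h1, h⟩) (fun h => ⟨h1, h⟩)
    rcases Set.infinite_union.1 (hc.mono hsub) with h | h
    · exact Or.inl ⟨j, c, h, hk⟩
    · exact Or.inr ⟨j, c, h, hk⟩

theorem not_rk_empty {N : ℕ} : ∀ {S : Set (Fin n → M)}, S = ∅ → ¬ Rk δ r π k N S := by
  induction N with
  | zero => rintro S rfl h; exact Set.not_nonempty_empty h
  | succ N ih =>
    rintro S rfl ⟨j, c, hc, -⟩
    obtain ⟨a, -, ha⟩ := hc.nonempty
    exact ih (Set.empty_inter _) ha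

theorem Rk.iUnion {N t : ℕ} (S : Fin t → Set (Fin n → M)) (h : Rk δ r π k N (⋃ i, S i)) :
    ∃ i, Rk δ r π k N (S i) := by
  induction t with
  | zero => exact absurd h (not_rk_empty (by simp))
  | succ t ih =>
    have hsub : (⋃ i, S i) ⊆ S 0 ∪ ⋃ i : Fin t, S i.succ := by
      rintro x hx
      obtain ⟨i, hi⟩ := Set.mem_iUnion.1 hx
      refine Fin.cases (fun h => Or.inl h) (fun i h => Or.inr (Set.mem_iUnion.2 ⟨i, h⟩)) i hi
    rcases (h.mono hsub).union with h | h
    · exact ⟨0, h⟩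
    · obtain ⟨i, hi⟩ := ih _ h
      exact ⟨_, hi⟩

theorem realize_equiv {α : Type} (σ : M ≃[L] M) (φ : L.Formula α) (v : α → M) :
    φ.Realize (σ ∘ v) ↔ φ.Realize v := StrongHomClass.realize_formula σ φ

theorem realize_equiv_elim {α β : Type} (σ : M ≃[L] M) (φ : L.Formula (α ⊕ β)) (x : α → M)
    (y : β → M) : φ.Realize (Sum.elim (σ ∘ x) (σ ∘ y)) ↔ φ.Realize (Sum.elim x y) := by
  rw [← realize_equiv σ φ (Sum.elim x y), Sum.comp_elim]

theorem comp_symm_comp {α : Type} (σ : M ≃[L] M) (v : α → M) : σ ∘ (σ.symm ∘ v) = v := by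
  funext i; simp

theorem symm_comp_comp {α : Type} (σ : M ≃[L] M) (v : α → M) : σ.symm ∘ (σ ∘ v) = v := by
  funext i; simp

theorem comp_inj {α : Type} (σ : M ≃[L] M) {v w : α → M} (h : σ ∘ v = σ ∘ w) : v = w := by
  rw [← symm_comp_comp σ v, h, symm_comp_comp]

theorem kInc_equiv {n m k : ℕ} (σ : M ≃[L] M) {δ : L.Formula (Fin n ⊕ Fin m)}
    {S S' : Set (Fin m → M)} (hS : ∀ y, σ ∘ y ∈ S' → y ∈ S) (h : KInconsistent L δ S k) :
    KInconsistent L δ S' k := by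
  rintro bs hbs hinj ⟨x, hx⟩
  refine h (fun i => σ.symm ∘ bs i) (fun i => hS _ (by rw [comp_symm_comp]; exact hbs i))
    (fun i j hij => hinj (comp_inj σ.symm hij)) ⟨σ.symm ∘ x, fun i => ?_⟩
  rw [realize_equiv_elim]; exact hx i

theorem Rk.equiv (σ : M ≃[L] M) {N : ℕ} : ∀ {S S' : Set (Fin n → M)},
    (∀ x ∈ S, σ ∘ x ∈ S') → Rk δ r π k N S → Rk δ r π k N S' := by
  induction N with
  | zero => rintro S S' h ⟨x, hx⟩; exact ⟨_, h x hx⟩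
  | succ N ih =>
    rintro S S' h ⟨j, c, hc, hk⟩
    refine ⟨j, σ ∘ c, ?_, kInc_equiv σ (fun y hy => ?_) hk⟩
    · refine (hc.image (f := fun a => σ ∘ a) (fun a _ b _ hab => comp_inj σ hab)).mono ?_
      rintro _ ⟨a, ⟨h1, h2⟩, rfl⟩
      refine ⟨(realize_equiv_elim σ _ _ _).2 h1, ih ?_ h2⟩
      rintro x ⟨hx, hx'⟩
      exact ⟨h x hx, (realize_equiv_elim σ _ _ _).2 hx'⟩
    · exact (realize_equiv_elim σ _ _ _).1 hy

/-- A big joint rank forces a big single rank. -/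
theorem Rk.single {N : ℕ} : ∀ {S : Set (Fin n → M)} (t : Fin s → ℕ), ∑ j, t j ≤ N →
    Rk δ r π k (N + 1) S → ∃ j, RankGE L (δ j) (π j) (k j) (t j) S := by
  induction N with
  | zero =>
    rintro S t ht ⟨j, c, hc, -⟩
    have : t j = 0 := by
      have := Finset.single_le_sum (f := t) (fun i _ => Nat.zero_le _) (Finset.mem_univ j)
      omega
    obtain ⟨a, -, x, hx, -⟩ := hc.nonempty
    exact ⟨j, by rw [this]; exact ⟨x, hx⟩⟩
  | succ N ih =>
    rintro S t ht ⟨j, c, hc, hk⟩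
    by_contra! hno
    rcases Nat.exists_eq_add_one_of_ne_zero (n := t j) (by
      intro h0
      obtain ⟨a, -, ha⟩ := hc.nonempty
      apply hno j
      rw [h0]
      by_contra hS
      exact not_rk_empty (by rw [Set.not_nonempty_iff_eq_empty.1 hS, Set.empty_inter]) ha)
      with ⟨u, hu⟩
    apply hno j
    rw [hu]
    refine ⟨c, hc.mono ?_, hk⟩
    rintro a ⟨h1, h2⟩
    refine ⟨h1, ?_⟩
    have hsum : ∑ i, Function.update t j u i ≤ N := by
      have e1 := Finset.sum_update_of_mem (Finset.mem_univ j) t u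
      have e2 := Finset.add_sum_erase Finset.univ t (Finset.mem_univ j)
      rw [Finset.sdiff_singleton_eq_erase] at e1
      omega
    obtain ⟨i, hi⟩ := ih (Function.update t j u) hsum h2
    by_cases hij : i = j
    · subst hij
      rwa [Function.update_self] at hi
    · rw [Function.update_of_ne hij] at hi
      exact absurd (RankGE.mono Set.inter_subset_left hi) (hno i)

theorem exists_not_rk (h : IsRosy L (M := M)) : ∃ N, ¬ Rk δ r π k N (Set.univ : Set (Fin n → M)) := by
  choose t ht using fun j => h n m (r j) (k j) (δ j) (π j)
  refine ⟨∑ j, t j + 1, fun hr => ?_⟩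
  obtain ⟨j, hj⟩ := Rk.single t le_rfl hr
  exact ht j hj

end

theorem typeSet_equiv {m : ℕ} (σ : M ≃[L] M) {A A' : Set M} {e : Fin m → M}
    (hA : ∀ x ∈ A', σ.symm x ∈ A) (h : (typeSet L A e).Infinite) :
    (typeSet L A' (σ ∘ e)).Infinite := by
  refine (h.image (f := fun a => σ ∘ a) (fun a _ b _ hab => comp_inj σ hab)).mono ?_
  rintro _ ⟨y, hy, rfl⟩
  intro q c hc φ
  have := hy q (σ.symm ∘ c) (fun i => hA _ (hc i)) φ
  rw [← realize_equiv_elim σ φ e, ← realize_equiv_elim σ φ y, comp_symm_comp] at this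
  exact this

theorem symm_of_rosy {κ : Cardinal.{u}} (hM : IsMonster L (M := M) κ) (hκ : ℵ₀ < κ)
    (hr : IsRosy L (M := M)) {n p : ℕ} {a : Fin n → M} {b : Fin p → M} {A : Set M} (hA : #A < κ)
    (hb : TypeThForks L b (A ∪ Set.range a) A) : TypeThForks L a (A ∪ Set.range b) A := by
  by_contra hna
  obtain ⟨l, d, φ, hd, hφ, s, m, ψ, e, himp, hdiv⟩ := hb
  choose q c hinf k hk using hdiv
  have hcard : ∀ (B F : Set M), #B < κ → F.Finite → #(B ∪ F : Set M) < κ := fun B F hB hF =>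
    card_union_lt hκ hB (card_finite_lt hκ hF)
  choose D hD heD hkD using fun j =>
    exists_kInconsistent hM (hcard A _ hA (Set.finite_range (c j))) (hk j)
  choose r z π hz hπ using fun j => exists_formula (hD j)
  obtain ⟨N, hN⟩ := exists_not_rk (δ := ψ) (r := r) (π := π) (k := k) hr
  -- the main claim
  have claim : ∀ i ≤ N, ∀ B : Set M, #B < κ → A ∪ Set.range b ⊆ B →
      ∃ (S : Set (Fin p → M)) (F : Set M), F.Finite ∧ b ∈ S ∧
        (∀ σ : M ≃[L] M, (∀ x ∈ A ∪ F, σ x = x) → ∀ x ∈ S, σ ∘ x ∈ S) ∧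
        ¬ Rk ψ r π k (N - i) S ∧
        ∀ (m' : ℕ) (e' : Fin m' → M) (F' : Set M), (∀ i, e' i ∈ B) → F' ⊆ B → F'.Finite →
          (typeSet L (A ∪ F') e').Infinite → (typeSet L (A ∪ (F' ∪ F)) e').Infinite := by
    intro i
    induction i with
    | zero =>
      intro _ B hB hAB
      exact ⟨Set.univ, ∅, Set.finite_empty, trivial, fun _ _ _ _ => trivial, hN, by simp⟩
    | succ i ih =>
      intro hi B hB hAB
      obtain ⟨a', ha', hind⟩ := exists_ind hM hκ (B := B)
        (hcard A _ hA (Set.finite_range b)) hB hna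
      obtain ⟨σ, hσ, rfl⟩ := hM.homogeneous _ (hcard A _ hA (Set.finite_range b)) n a a' ha'
      have hσA : ∀ x ∈ A, σ x = x := fun x hx => hσ x (Or.inl hx)
      have hσA' : ∀ x ∈ A, σ.symm x = x := fun x hx => by
        conv_lhs => rw [← hσA x hx]
        simp
      have hσb : σ ∘ b = b := by funext i; exact hσ _ (Or.inr ⟨i, rfl⟩)
      let W : Set M := Set.range (σ ∘ a) ∪ ⋃ j, (Set.range (σ ∘ e j) ∪ Set.range (σ ∘ c j))
      have hW : W.Finite := (Set.finite_range _).union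
        (Set.finite_iUnion fun j => (Set.finite_range _).union (Set.finite_range _))
      obtain ⟨S, F, hF, hbS, hinv, hrk, hindep⟩ := ih (by omega) (B ∪ W) (hcard B W hB hW)
        (hAB.trans Set.subset_union_left)
      have haW : Set.range (σ ∘ a) ⊆ B ∪ W := fun x hx => Or.inr (Or.inl hx)
      refine ⟨S ∩ {y | φ.Realize (Sum.elim y (σ ∘ d))}, Set.range (σ ∘ a) ∪ F,
        (Set.finite_range _).union hF, ⟨hbS, ?_⟩, ?_, ?_, ?_⟩
      · have := (realize_equiv_elim σ φ b d).2 hφ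
        rw [hσb] at this
        exact this
      · rintro τ hτ x ⟨hx, hx'⟩
        refine ⟨hinv τ (fun y hy => hτ y (hy.imp id Or.inr)) x hx, ?_⟩
        have h1 : τ ∘ (σ ∘ d) = σ ∘ d := by
          funext i
          refine hτ _ ?_
          rcases hd i with h | ⟨t, h⟩
          · left; rw [Function.comp_apply, hσA _ h]; exact h
          · right; left; exact ⟨t, by simp [h]⟩
        have := (realize_equiv_elim τ φ x (σ ∘ d)).2 hx'
        rw [h1] at this
        exact this
      · intro hR
        have hsub : S ∩ {y | φ.Realize (Sum.elim y (σ ∘ d))} ⊆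
            ⋃ j, (S ∩ {y | (ψ j).Realize (Sum.elim y (σ ∘ e j))}) := by
          rintro y ⟨hy, hy'⟩
          have hy2 : φ.Realize (Sum.elim (σ.symm ∘ y) d) := by
            rw [← realize_equiv_elim σ, comp_symm_comp]; exact hy'
          obtain ⟨j, hj⟩ := himp _ hy2
          rw [← realize_equiv_elim σ, comp_symm_comp] at hj
          exact Set.mem_iUnion.2 ⟨j, hy, hj⟩
        obtain ⟨j, hj⟩ := Rk.iUnion _ (hR.mono hsub)
        apply hrk
        have hNi : N - i = N - (i + 1) + 1 := by omega
        rw [hNi]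
        have hfix : ∀ x ∈ A ∪ Set.range (σ ∘ c j), σ.symm x ∈ A ∪ Set.range (c j) := by
          rintro x (hx | ⟨t, rfl⟩)
          · left; rw [hσA' x hx]; exact hx
          · right; exact ⟨t, by simp⟩
        have hinf1 : (typeSet L (A ∪ Set.range (σ ∘ c j)) (σ ∘ e j)).Infinite :=
          typeSet_equiv σ hfix (hinf j)
        have hinf2 := hindep m (σ ∘ e j) (Set.range (σ ∘ c j))
          (fun t => Or.inr (Or.inr (Set.mem_iUnion.2 ⟨j, Or.inl ⟨t, rfl⟩⟩)))
          (fun x hx => Or.inr (Or.inr (Set.mem_iUnion.2 ⟨j, Or.inr hx⟩)))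
          (Set.finite_range _) hinf1
        refine ⟨j, σ ∘ z j, hinf2.mono ?_, ?_⟩
        · intro e' he'
          obtain ⟨τ, hτ, rfl⟩ := hM.homogeneous _ (hcard A _ hA ((Set.finite_range _).union hF))
            m _ _ he'
          have hτz : τ ∘ (σ ∘ z j) = σ ∘ z j := by
            funext t
            refine hτ _ ?_
            rcases hz j t with h | ⟨t', h⟩
            · left; rw [Function.comp_apply, hσA _ h]; exact h
            · right; left; exact ⟨t', by simp [h]⟩
          constructor
          · have h1 := heD j
            rw [hπ j] at h1
            have h2 := (realize_equiv_elim τ _ _ _).2 ((realize_equiv_elim σ _ _ _).2 h1)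
            rw [hτz] at h2
            exact h2
          · refine hj.equiv τ ?_
            rintro x ⟨hx, hx'⟩
            exact ⟨hinv τ (fun y hy => hτ y (hy.imp id Or.inr)) x hx,
              (realize_equiv_elim τ _ _ _).2 hx'⟩
        · refine kInc_equiv σ (fun y hy => ?_) (hkD j)
          rw [hπ j]
          exact (realize_equiv_elim σ _ _ _).1 hy
      · intro m' e' F' he' hF' hF'fin hinf'
        have h1 := ind_infinite hM hκ hA hind (Set.subset_union_left.trans hAB) hF'fin hF' he' hinf'
        rw [Set.union_assoc] at h1
        have h2 := hindep m' e' (F' ∪ Set.range (σ ∘ a)) (fun t => Or.inl (he' t))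
          (Set.union_subset (hF'.trans Set.subset_union_left) haW)
          (hF'fin.union (Set.finite_range _)) h1
        rwa [Set.union_assoc] at h2
  obtain ⟨S, F, -, hbS, -, hrk, -⟩ := claim N le_rfl _ (hcard A _ hA (Set.finite_range b)) le_rfl
  rw [Nat.sub_self] at hrk
  exact hrk ⟨b, hbS⟩

/-! ### Symmetry implies rosy -/

/-- A definable finite-branching approximation of the rank. -/
def R {n m r : ℕ} (δ : L.Formula (Fin n ⊕ Fin m)) (π : L.Formula (Fin m ⊕ Fin r)) (k l : ℕ) :
    ℕ → Set (Fin n → M) → Prop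
  | 0, S => S.Nonempty
  | (N + 1), S => ∃ c : Fin r → M, KInconsistent L δ {a | π.Realize (Sum.elim a c)} k ∧
      ∃ w : Fin (l + 1) → Fin m → M, Function.Injective w ∧
        ∀ i, π.Realize (Sum.elim (w i) c) ∧
          R δ π k l N (S ∩ {x | δ.Realize (Sum.elim x (w i))})

/-- `v = (y, z)` with `y` in a fibre of `χ` over `z` with at most `l` elements. -/
def Bd {m r : ℕ} (χ : Set (Fin m ⊕ Fin r → M)) (l : ℕ) : Set (Fin m ⊕ Fin r → M) :=
  {v | v ∈ χ} ∩ {v | ∃ w : Fin (l + 1) → Fin m → M, Function.Injective w ∧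
    ∀ i, Sum.elim (w i) (v ∘ Sum.inr) ∈ χ}ᶜ

section

variable {n m r k : ℕ} {δ : L.Formula (Fin n ⊕ Fin m)} {π : L.Formula (Fin m ⊕ Fin r)}

theorem R.of_rank {l N : ℕ} : ∀ {S : Set (Fin n → M)}, RankGE L δ π k N S → R δ π k l N S := by
  induction N with
  | zero => exact fun h => h
  | succ N ih =>
    rintro S ⟨c, hc, hk⟩
    refine ⟨c, hk, fun i => hc.natEmbedding _ i, fun i j hij => ?_, fun i => ?_⟩
    · exact Fin.ext ((hc.natEmbedding _).injective (Subtype.ext hij))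
    · exact ⟨(hc.natEmbedding _ i).2.1, ih (hc.natEmbedding _ i).2.2⟩

theorem R.mono {l N : ℕ} : ∀ {S S' : Set (Fin n → M)}, S ⊆ S' →
    R δ π k l N S → R δ π k l N S' := by
  induction N with
  | zero => intro S S' h h'; exact Set.Nonempty.mono h h'
  | succ N ih =>
    rintro S S' h ⟨c, hk, w, hw, hR⟩
    exact ⟨c, hk, w, hw, fun i =>
      ⟨(hR i).1, ih (Set.inter_subset_inter_left _ h) (hR i).2⟩⟩

theorem R.anti_l {l l' N : ℕ} (hl : l ≤ l') : ∀ {S : Set (Fin n → M)},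
    R δ π k l' N S → R δ π k l N S := by
  induction N with
  | zero => exact fun h => h
  | succ N ih =>
    rintro S ⟨c, hk, w, hw, hR⟩
    exact ⟨c, hk, fun i => w (Fin.castLE (by omega) i),
      fun i j hij => Fin.castLE_injective _ (hw hij), fun i => ⟨(hR _).1, ih (hR _).2⟩⟩

theorem R.anti_N {l N N' : ℕ} (hN : N ≤ N') {S : Set (Fin n → M)}
    (h : R δ π k l N' S) : R δ π k l N S := by
  induction N', hN using Nat.le_induction with
  | base => exact h
  | succ N' _ ih =>
    apply ih
    obtain ⟨c, hk, w, hw, hR⟩ := h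
    exact R.mono Set.inter_subset_left (hR 0).2

theorem definable_kInc {A : Set M} :
    A.Definable L {z : Fin r → M | KInconsistent L δ {a | π.Realize (Sum.elim a z)} k} := by
  have h : A.Definable L {z : Fin r → M | ∃ x : Fin n → M, ∃ w : Fin k → Fin m → M,
      Function.Injective w ∧ ∀ i, π.Realize (Sum.elim (w i) z) ∧
        δ.Realize (Sum.elim x (w i))} := by
    apply definable_exists
    apply definable_atLeast k (P := fun (u : Fin r ⊕ Fin n → M) (y : Fin m → M) =>
      π.Realize (Sum.elim y (u ∘ Sum.inl)) ∧ δ.Realize (Sum.elim (u ∘ Sum.inr) y))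
    have h1 := (definable_realize (A := A) π).preimage_comp
      (Sum.elim Sum.inr (Sum.inl ∘ Sum.inl) : Fin m ⊕ Fin r → (Fin r ⊕ Fin n) ⊕ Fin m)
    have h2 := (definable_realize (A := A) δ).preimage_comp
      (Sum.elim (Sum.inl ∘ Sum.inr) Sum.inr : Fin n ⊕ Fin m → (Fin r ⊕ Fin n) ⊕ Fin m)
    convert h1.inter h2 using 1
    ext w
    simp only [Set.mem_inter_iff, Set.mem_preimage, mem_ofPred_eq, Sum.comp_elim]
    rfl
  convert h.compl using 1
  ext z
  simp only [KInconsistent, mem_ofPred_eq, Set.mem_compl_iff]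
  constructor
  · rintro h ⟨x, w, hw, hP⟩
    exact h w (fun i => (hP i).1) hw ⟨x, fun i => (hP i).2⟩
  · rintro h w hP hw ⟨x, hx⟩
    exact h ⟨x, w, hw, fun i => ⟨hP i, hx i⟩⟩

theorem definable_R {A : Set M} {l N : ℕ} : ∀ {β : Type} [Finite β]
    {T : (β → M) → (Fin n → M) → Prop}
    (_ : A.Definable L {w : β ⊕ Fin n → M | T (w ∘ Sum.inl) (w ∘ Sum.inr)}),
    A.Definable L {v | R δ π k l N {x | T v x}} := by
  induction N with
  | zero =>
    intro β _ T h
    exact definable_exists h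
  | succ N ih =>
    intro β _ T h
    have key : A.Definable L {w : β ⊕ Fin r → M |
        KInconsistent L δ {a | π.Realize (Sum.elim a (w ∘ Sum.inr))} k ∧
        ∃ u : Fin (l + 1) → Fin m → M, Function.Injective u ∧
        ∀ i, π.Realize (Sum.elim (u i) (w ∘ Sum.inr)) ∧
          R δ π k l N ({x | T (w ∘ Sum.inl) x} ∩ {x | δ.Realize (Sum.elim x (u i))})} := by
      refine Definable.inter
        (f := {w : β ⊕ Fin r → M |
          KInconsistent L δ {a | π.Realize (Sum.elim a (w ∘ Sum.inr))} k}) ?_ ?_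
      · exact (definable_kInc (A := A) (δ := δ) (π := π) (k := k)).preimage_comp Sum.inr
      · apply definable_atLeast (l + 1) (P := fun (w : β ⊕ Fin r → M) (y : Fin m → M) =>
          π.Realize (Sum.elim y (w ∘ Sum.inr)) ∧
          R δ π k l N ({x | T (w ∘ Sum.inl) x} ∩ {x | δ.Realize (Sum.elim x y)}))
        have h1 := (definable_realize (A := A) π).preimage_comp
          (Sum.elim Sum.inr (Sum.inl ∘ Sum.inr) : Fin m ⊕ Fin r → (β ⊕ Fin r) ⊕ Fin m)
        have h2 := ih (β := (β ⊕ Fin r) ⊕ Fin m)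
          (T := fun u x => T (u ∘ Sum.inl ∘ Sum.inl) x ∧ δ.Realize (Sum.elim x (u ∘ Sum.inr))) (by
            have h3 := h.preimage_comp (Sum.elim (Sum.inl ∘ Sum.inl ∘ Sum.inl) Sum.inr :
              β ⊕ Fin n → ((β ⊕ Fin r) ⊕ Fin m) ⊕ Fin n)
            have h4 := (definable_realize (A := A) δ).preimage_comp
              (Sum.elim Sum.inr (Sum.inl ∘ Sum.inr) :
                Fin n ⊕ Fin m → ((β ⊕ Fin r) ⊕ Fin m) ⊕ Fin n)
            convert h3.inter h4 using 1
            ext w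
            simp only [Set.mem_inter_iff, Set.mem_preimage, mem_ofPred_eq, Sum.comp_elim]
            rfl)
        convert h1.inter h2 using 1
        ext w
        simp only [Set.mem_inter_iff, Set.mem_preimage, mem_ofPred_eq, Sum.comp_elim]
        rfl
    exact definable_exists key

theorem definable_Bd {A : Set M} {χ : Set (Fin m ⊕ Fin r → M)} (h : A.Definable L χ) (l : ℕ) :
    A.Definable L (Bd χ l) := by
  refine h.inter (Definable.compl ?_)
  apply definable_atLeast (l + 1) (P := fun (v : Fin m ⊕ Fin r → M) (y : Fin m → M) =>
    Sum.elim y (v ∘ Sum.inr) ∈ χ)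
  convert h.preimage_comp
    (Sum.elim Sum.inr (Sum.inl ∘ Sum.inr) : Fin m ⊕ Fin r → (Fin m ⊕ Fin r) ⊕ Fin m) using 1
  ext w
  simp only [Set.mem_preimage, mem_ofPred_eq, Sum.comp_elim]
  rfl

theorem step {κ : Cardinal.{u}} (hM : IsMonster L (M := M) κ) {P : Set M} (hP : #P < κ)
    {S : Set (Fin n → M)} (hS : P.Definable L S) (hR : ∀ l N, R δ π k l N S) :
    ∃ v : Fin m ⊕ Fin r → M, π.Realize v ∧
      KInconsistent L δ {a | π.Realize (Sum.elim a (v ∘ Sum.inr))} k ∧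
      (∀ l N, R δ π k l N (S ∩ {x | δ.Realize (Sum.elim x (v ∘ Sum.inl))})) ∧
      ∀ χ, P.Definable L χ → ∀ l, v ∉ Bd χ l := by
  classical
  let K : Set (Fin m ⊕ Fin r → M) := {v | π.Realize v} ∩
    {v | KInconsistent L δ {a | π.Realize (Sum.elim a (v ∘ Sum.inr))} k}
  let E : ℕ → ℕ → Set (Fin m ⊕ Fin r → M) := fun l N =>
    {v | R δ π k l N (S ∩ {x | δ.Realize (Sum.elim x (v ∘ Sum.inl))})}
  have hK : P.Definable L K := (definable_realize π).inter
    ((definable_kInc (A := P) (δ := δ) (π := π) (k := k)).preimage_comp Sum.inr)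
  have hE : ∀ l N, P.Definable L (E l N) := by
    intro l N
    apply definable_R (T := fun (v : Fin m ⊕ Fin r → M) x =>
      x ∈ S ∧ δ.Realize (Sum.elim x (v ∘ Sum.inl)))
    have h1 := hS.preimage_comp (Sum.inr : Fin n → (Fin m ⊕ Fin r) ⊕ Fin n)
    have h2 := (definable_realize (A := P) δ).preimage_comp
      (Sum.elim Sum.inr (Sum.inl ∘ Sum.inl) : Fin n ⊕ Fin m → (Fin m ⊕ Fin r) ⊕ Fin n)
    convert h1.inter h2 using 1
    ext w
    simp only [Set.mem_inter_iff, Set.mem_preimage, mem_ofPred_eq, Sum.comp_elim]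
    rfl
  obtain ⟨v, hv⟩ := saturated hM hP
    ({K} ∪ {D | ∃ l N, D = E l N} ∪ {D | ∃ χ l, P.Definable L χ ∧ D = (Bd χ l)ᶜ}) (by
      rintro D ((rfl | ⟨l, N, rfl⟩) | ⟨χ, l, hχ, rfl⟩)
      · exact hK
      · exact hE l N
      · exact (definable_Bd hχ l).compl) (by
      intro s hs
      have hch : ∀ D : Set (Fin m ⊕ Fin r → M), ∃ (l N b : ℕ) (χ : Set (Fin m ⊕ Fin r → M)),
          D ∈ s → D = K ∨ D = E l N ∨ D = (Bd χ b)ᶜ := by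
        intro D
        by_cases hD : D ∈ s
        · rcases hs hD with (h | ⟨l, N, h⟩) | ⟨χ, b, _, h⟩
          · exact ⟨0, 0, 0, ∅, fun _ => Or.inl h⟩
          · exact ⟨l, N, 0, ∅, fun _ => Or.inr (Or.inl h)⟩
          · exact ⟨0, 0, b, χ, fun _ => Or.inr (Or.inr h)⟩
        · exact ⟨0, 0, 0, ∅, fun h => absurd h hD⟩
      choose lf Nf bf χf hf using hch
      let Lb := s.sup lf + ∑ D ∈ s, bf D
      let Nb := s.sup Nf
      obtain ⟨c, hk, w, hw, hwR⟩ := hR Lb (Nb + 1)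
      have hex : ∃ i, ∀ D ∈ s, Sum.elim (w i) c ∉ Bd (χf D) (bf D) := by
        by_contra! hno
        choose f hfs hfB using hno
        have hcard : ∀ D ∈ s, (Finset.univ.filter fun i => f i = D).card ≤ bf D := by
          intro D hD
          by_contra! hlt
          let g := Finset.orderEmbOfCardLe _ (Nat.succ_le_of_lt hlt)
          have hg : ∀ i, f (g i) = D := fun i =>
            (Finset.mem_filter.1 (Finset.orderEmbOfCardLe_mem _ (Nat.succ_le_of_lt hlt) i)).2
          have h0 := hfB (g 0)
          rw [hg] at h0
          refine h0.2 ⟨fun i => w (g i), fun i j hij => g.injective (hw hij), fun i => ?_⟩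
          have h1 := hfB (g i)
          rw [hg] at h1
          exact h1.1
        have h1 := Finset.card_eq_sum_card_fiberwise (s := Finset.univ) (t := s) (f := f)
          (fun i _ => hfs i)
        have h2 := Finset.sum_le_sum hcard
        rw [← h1] at h2
        simp only [Finset.card_univ, Fintype.card_fin] at h2
        simp only [Lb] at h2
        omega
      obtain ⟨i, hi⟩ := hex
      refine ⟨Sum.elim (w i) c, fun D hD => ?_⟩
      rcases hf D hD with h | h | h
      · rw [h]; exact ⟨(hwR i).1, hk⟩
      · rw [h]
        refine R.anti_l ?_ (R.anti_N ?_ (hwR i).2)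
        · exact (Finset.le_sup hD).trans (Nat.le_add_right _ _)
        · exact Finset.le_sup hD
      · rw [h]; exact hi D hD)
  have h1 := hv K (Or.inl (Or.inl rfl))
  exact ⟨v, h1.1, h1.2, fun l N => hv _ (Or.inl (Or.inr ⟨l, N, rfl⟩)),
    fun χ hχ l => hv _ (Or.inr ⟨χ, l, hχ, rfl⟩)⟩

end

theorem not_stronglyDivides_of_mem {n m : ℕ} {δ : L.Formula (Fin n ⊕ Fin m)} {b : Fin m → M}
    {A : Set M} (h : StronglyDivides L δ b A) {x : Fin n → M} (hx : ∀ i, x i ∈ A) :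
    ¬ δ.Realize (Sum.elim x b) := by
  intro hr
  obtain ⟨hinf, k, hk⟩ := h
  have hinf : (typeSet L A b).Infinite := hinf
  refine hk (fun i => hinf.natEmbedding _ i) (fun i => (hinf.natEmbedding _ i).2)
    (fun i j hij => Fin.ext ((hinf.natEmbedding _).injective (Subtype.ext hij)))
    ⟨x, fun i => ?_⟩
  have h1 := definable_of_formula (A := A) (δ.relabel Sum.swap) x hx
  have h2 : ∀ y : Fin m → M, (δ.relabel Sum.swap).Realize (Sum.elim y x) ↔
      δ.Realize (Sum.elim x y) := by
    intro y
    rw [Formula.realize_relabel]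
    refine iff_of_eq (congrArg _ ?_)
    funext i; rcases i with i | i <;> rfl
  have h3 := typeSet_subset h1 (e := b) ((h2 b).2 hr) (hinf.natEmbedding _ i).2
  exact (h2 _).1 h3

theorem rosy_of_symm {κ : Cardinal.{u}} (hM : IsMonster L (M := M) κ) (hκ : ℵ₀ < κ)
    (hsymm : ∀ (n p : ℕ) (a : Fin n → M) (b : Fin p → M) (A : Set M), #A < κ →
      TypeThForks L a (A ∪ Set.range b) A → TypeThForks L b (A ∪ Set.range a) A) :
    IsRosy L (M := M) := by
  classical
  intro n m r k δ π
  by_contra! hrank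
  -- the states of the construction
  let St := {q : Set M × Set (Fin n → M) // q.1.Finite ∧ q.1.Definable L q.2 ∧
    ∀ l N, R δ π k l N q.2}
  have hstep : ∀ q : St, ∃ v : Fin m ⊕ Fin r → M, π.Realize v ∧
      KInconsistent L δ {a | π.Realize (Sum.elim a (v ∘ Sum.inr))} k ∧
      (∀ l N, R δ π k l N (q.1.2 ∩ {x | δ.Realize (Sum.elim x (v ∘ Sum.inl))})) ∧
      ∀ χ, q.1.1.Definable L χ → ∀ l, v ∉ Bd χ l := fun q =>
    step hM (card_finite_lt hκ q.2.1) q.2.2.1 q.2.2.2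
  choose V hVπ hVk hVR hVB using hstep
  let next : St → St := fun q =>
    ⟨(q.1.1 ∪ Set.range (V q), q.1.2 ∩ {x | δ.Realize (Sum.elim x (V q ∘ Sum.inl))}),
      q.2.1.union (Set.finite_range _),
      (q.2.2.1.mono Set.subset_union_left).inter
        (definable_of_formula δ _ fun i => Or.inr ⟨Sum.inl i, rfl⟩), hVR q⟩
  let st0 : St := ⟨(∅, Set.univ), Set.finite_empty, definable_univ,
    fun l N => R.of_rank (hrank N)⟩
  let st : ℕ → St := fun i => Nat.rec st0 (fun _ q => next q) i
  have hst : ∀ i, st (i + 1) = next (st i) := fun i => rfl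
  let b : ℕ → Fin m ⊕ Fin r → M := fun i => V (st i)
  have hPmono : Monotone fun i => (st i).1.1 :=
    monotone_nat_of_le_succ fun i => by rw [hst]; exact Set.subset_union_left
  have hSanti : Antitone fun i => (st i).1.2 :=
    antitone_nat_of_succ_le fun i => by rw [hst]; exact Set.inter_subset_left
  let C : Set M := ⋃ i, (st i).1.1
  have hC : #C < κ := by
    have : C.Countable := Set.countable_iUnion fun i => (st i).2.1.countable
    exact (le_aleph0_iff_set_countable.2 this).trans_lt hκ
  have hbC : ∀ i t, b i t ∈ C := fun i t =>
    Set.mem_iUnion.2 ⟨i + 1, by rw [hst]; exact Or.inr ⟨t, rfl⟩⟩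
  -- a realization of all the formulas
  obtain ⟨x, hx⟩ := saturated hM hC
    {D : Set (Fin n → M) | ∃ i, D = {x | δ.Realize (Sum.elim x (b i ∘ Sum.inl))}} (by
      rintro D ⟨i, rfl⟩
      exact definable_of_formula δ _ fun t => hbC i _) (by
      intro s hs
      have hch : ∀ D : Set (Fin n → M), ∃ i, D ∈ s →
          D = {x | δ.Realize (Sum.elim x (b i ∘ Sum.inl))} := by
        intro D
        by_cases hD : D ∈ s
        · obtain ⟨i, hi⟩ := hs hD
          exact ⟨i, fun _ => hi⟩
        · exact ⟨0, fun h => absurd h hD⟩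
      choose f hf using hch
      obtain ⟨x, hx⟩ : (st (s.sup f + 1)).1.2.Nonempty := (st (s.sup f + 1)).2.2.2 0 0
      refine ⟨x, fun D hD => ?_⟩
      have h1 : x ∈ (st (f D + 1)).1.2 :=
        hSanti (Nat.add_le_add_right (Finset.le_sup hD) 1) hx
      rw [hst] at h1
      rw [hf D hD]
      exact h1.2)
  have hx' : ∀ i, δ.Realize (Sum.elim x (b i ∘ Sum.inl)) := fun i => hx _ ⟨i, rfl⟩
  -- the limit of the sequence along an ultrafilter
  let U := Filter.hyperfilter ℕ
  have hCx : #(C ∪ Set.range x : Set M) < κ :=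
    card_union_lt hκ hC (card_finite_lt hκ (Set.finite_range x))
  obtain ⟨v, hv⟩ := saturated hM hCx
    {D : Set (Fin m ⊕ Fin r → M) | (C ∪ Set.range x).Definable L D ∧
      ∀ᶠ i in (U : Filter ℕ), b i ∈ D} (fun D hD => hD.1) (by
      intro s hs
      have : ∀ᶠ i in (U : Filter ℕ), ∀ D ∈ s, b i ∈ D :=
        (Filter.eventually_all_finset s).2 fun D hD => (hs hD).2
      obtain ⟨i, hi⟩ := this.exists
      exact ⟨b i, hi⟩)
  have hv' : ∀ D : Set (Fin m ⊕ Fin r → M), (C ∪ Set.range x).Definable L D → v ∈ D →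
      ∀ᶠ i in (U : Filter ℕ), b i ∈ D := by
    intro D hD hvD
    by_contra hno
    have h1 : ∀ᶠ i in (U : Filter ℕ), b i ∈ Dᶜ := Ultrafilter.eventually_not.2 hno
    exact hv Dᶜ ⟨hD.compl, h1⟩ hvD
  let v' : Fin (m + r) → M := v ∘ finSumFinEquiv.symm
  have hrv : Set.range v' = Set.range v := by
    simp only [v']
    exact EquivLike.range_comp v _
  -- the limit does not fork
  have hnf : ¬ TypeThForks L v' (C ∪ Set.range x) C := by
    rintro ⟨l, d, φ, hd, hφ, s, m', ψ, e, himp, hdiv⟩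
    have h1 := (definable_of_formula φ d hd).preimage_comp
      (finSumFinEquiv (m := m) (n := r)).symm
    obtain ⟨i, hi⟩ := (hv' _ h1 hφ).exists
    obtain ⟨j, hj⟩ := himp _ hi
    obtain ⟨p, c, hsd⟩ := hdiv j
    exact not_stronglyDivides_of_mem hsd (fun t => Or.inl (hbC i _)) hj
  refine hnf (hsymm n (m + r) x v' C hC ?_)
  have hδv : δ.Realize (Sum.elim x (v ∘ Sum.inl)) := by
    have h1 := (definable_fiber (A := ∅) x
      (definable_realize (A := (∅ : Set M)) (δ.relabel Sum.swap))).preimage_comp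
      (Sum.inl : Fin m → Fin m ⊕ Fin r)
    have h2 : ∀ y : Fin m → M, (δ.relabel Sum.swap).Realize (Sum.elim y x) ↔
        δ.Realize (Sum.elim x y) := by
      intro y
      rw [Formula.realize_relabel]
      refine iff_of_eq (congrArg _ ?_)
      funext i; rcases i with i | i <;> rfl
    have h3 := hv _ ⟨h1.mono (Set.union_subset_union_left _ (Set.empty_subset C)),
      Filter.Eventually.of_forall fun i => (h2 _).2 (hx' i)⟩
    exact (h2 _).1 h3
  have hπv : π.Realize v := hv {v | π.Realize v} ⟨definable_realize π,
    Filter.Eventually.of_forall fun i => hVπ (st i)⟩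
  have hkv : KInconsistent L δ {a | π.Realize (Sum.elim a (v ∘ Sum.inr))} k :=
    hv {v | KInconsistent L δ {a | π.Realize (Sum.elim a (v ∘ Sum.inr))} k}
      ⟨(definable_kInc (δ := δ) (π := π) (k := k)).preimage_comp Sum.inr,
        Filter.Eventually.of_forall fun i => hVk (st i)⟩
  have hvv : Sum.elim (v ∘ Sum.inl) (v ∘ Sum.inr) = v := by
    funext i; rcases i with i | i <;> rfl
  refine ⟨m, v ∘ Sum.inl, δ, fun t => Or.inr ?_, hδv, 1, m, fun _ => δ, fun _ => v ∘ Sum.inl,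
    fun x hx => ⟨0, hx⟩, fun _ => ⟨r, v ∘ Sum.inr, ?_, k, ?_⟩⟩
  · rw [hrv]; exact ⟨_, rfl⟩
  · intro hfin
    obtain ⟨D, hD, hDfin, hvD⟩ := exists_finite_definable hM hκ
      (card_union_lt hκ hC (card_finite_lt hκ (Set.finite_range _))) hfin
    obtain ⟨D', hD', hDD'⟩ := definable_extract hD
    obtain ⟨A0, hA0, hD0⟩ := definable_iff_finitely_definable.1 hD'
    obtain ⟨N, hN⟩ : ∃ N, (A0 : Set M) ⊆ (st N).1.1 := by
      have : ∀ y : M, ∃ i, y ∈ A0 → y ∈ (st i).1.1 := by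
        intro y
        by_cases hy : y ∈ A0
        · obtain ⟨i, hi⟩ := Set.mem_iUnion.1 (hA0 hy)
          exact ⟨i, fun _ => hi⟩
        · exact ⟨0, fun h => absurd h hy⟩
      choose f hf using this
      exact ⟨A0.sup f, fun y hy => hPmono (Finset.le_sup hy) (hf y hy)⟩
    have hvB : v ∈ Bd D' D.ncard := by
      refine ⟨?_, ?_⟩
      · rw [hDD'] at hvD
        have hvD : Sum.elim (v ∘ Sum.inl) (v ∘ Sum.inr) ∈ D' := hvD
        rw [hvv] at hvD
        exact hvD
      · rintro ⟨w, hw, hwD⟩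
        have hsub : Set.range w ⊆ D := by
          rintro _ ⟨i, rfl⟩
          rw [hDD']
          exact hwD i
        have := Set.ncard_le_ncard hsub hDfin
        rw [Set.ncard_range_of_injective hw] at this
        simp at this
    have h1 := hv' _ ((definable_Bd hD' _).mono Set.subset_union_left) hvB
    have h2 : ∀ᶠ i in (U : Filter ℕ), N ≤ i :=
      Nat.hyperfilter_le_atTop (Filter.eventually_ge_atTop N)
    obtain ⟨i, hi, hNi⟩ := (h1.and h2).exists
    exact hVB (st i) D' (hD0.mono (hN.trans (hPmono hNi))) _ hi
  · rintro bs hbs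
    refine hkv bs fun i => ?_
    refine typeSet_subset (D := {a | π.Realize (Sum.elim a (v ∘ Sum.inr))})
      (definable_of_formula π _ fun t => Or.inr ⟨t, rfl⟩) ?_ (hbs i)
    show π.Realize (Sum.elim (v ∘ Sum.inl) (v ∘ Sum.inr))
    rw [hvv]; exact hπv


end ThProof

open ThForking in
/-- Let `T` be a complete first-order theory (realized as the theory of a
monster model `M`).  Then `T` is rosy if and only if þ-forking satisfies symmetry:
for all tuples `a, b` and all (small) sets `A`, `tp(a/Ab)` does not þ-fork over `A` if and
only if `tp(b/Aa)` does not þ-fork over `A`. -/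
theorem rosy_iff_thForking_symmetry
    (L : FirstOrder.Language.{u, u}) (M : Type u) [L.Structure M]
    (κ : Cardinal.{u}) (hκ : max Cardinal.aleph0 L.card < κ)
    (hM : IsMonster L (M := M) κ) :
    IsRosy L (M := M) ↔
      ∀ (n p : ℕ) (a : Fin n → M) (b : Fin p → M) (A : Set M), #A < κ →
        (¬ TypeThForks L a (A ∪ Set.range b) A ↔
          ¬ TypeThForks L b (A ∪ Set.range a) A) := by
  have hκ0 : Cardinal.aleph0 < κ := (le_max_left _ _).trans_lt hκ
  constructor
  · intro hr n p a b A hA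
    exact not_congr ⟨fun h => ThProof.symm_of_rosy hM hκ0 hr hA h,
      fun h => ThProof.symm_of_rosy hM hκ0 hr hA h⟩
  · intro h
    exact ThProof.rosy_of_symm hM hκ0 fun n p a b A hA =>
      (not_iff_not.1 (h n p a b A hA)).1
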